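/- arXiv:1610.07945 — 3 statements merged into one kernel-verified Lean document; each statement's English description precedes it below -/
import Mathlib

section
/- Let b₄⁻ ∈ [0, 1/2) be the root of the fourth Bernoulli polynomial B₄ in that interval, and suppose b₄⁻ ≤ a ≤ 1/2. Then ζ(σ, a) < 0 for every real σ with −3 < σ < −2. -/
open HurwitzZeta Polynomial Set

/-- The `n`-th Bernoulli polynomial evaluated at a real number. -/
noncomputable def bernoulliPoly (n : ℕ) (x : ℝ) : ℝ := Polynomial.aeval x (Polynomial.bernoulli n)

/-!
By Hurwitz's formula, `ζ(1 - s, a)` is a positive multiple of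
`cos (π s / 2) * C(s) + sin (π s / 2) * S(s)`, where `C(s) = ∑ cos (2 π a n) / n ^ s` and
`S(s) = ∑ sin (2 π a n) / n ^ s`. For `s = 4 - δ` with `0 < δ < 1` the two trigonometric factors
are `cos (π δ / 2) > 0` and `-sin (π δ / 2) < 0`. The value `C(4)` is a negative multiple of
`B₄(a) ≥ 0`, and `C` is Lipschitz with constant `1 / 3` on `[3, ∞)`, so `C(s) ≤ δ / 3`; comparing
`S` with its first term gives `S(s) ≥ sin (2 π a) / 3`. Only `C(s) ≥ 0` needs care: comparing `C`
with its first term then gives `cos (2 π a) ≥ -1 / 3`, while `B₄(a) ≥ 0` forces `a > 1 / 6`. So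
`sin (2 π a) ≥ 3 / 4`, which is large enough for `tan (π δ / 2) > π δ / 2` to conclude.
-/

section BernoulliPolynomial

lemma bernoulliPoly_four (x : ℝ) : bernoulliPoly 4 x = (x * (1 - x)) ^ 2 - 1 / 30 := by
  have h₃ : _root_.bernoulli 3 = 0 := bernoulli_eq_zero_of_odd (by decide) (by norm_num)
  have h₄ : _root_.bernoulli 4 = -1 / 30 := by
    rw [bernoulli_eq_bernoulli'_of_ne_one (by norm_num), bernoulli'_four]
  simp only [bernoulliPoly, Polynomial.bernoulli, Finset.sum_range_succ, Finset.sum_range_zero,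
    map_add, aeval_monomial, _root_.bernoulli_zero, _root_.bernoulli_one, bernoulli_two, h₃, h₄,
    show Nat.choose 4 2 = 6 from rfl]
  norm_num
  ring

lemma monotoneOn_bernoulliPoly_four : MonotoneOn (bernoulliPoly 4) (Icc 0 (1 / 2)) := by
  intro x hx y hy hxy
  have hx_nonneg : 0 ≤ x * (1 - x) := mul_nonneg hx.1 (by linarith [hx.2])
  have hmul_le : x * (1 - x) ≤ y * (1 - y) := by nlinarith [hx.2, hy.2]
  rw [bernoulliPoly_four, bernoulliPoly_four]
  gcongr

lemma one_sixth_lt_of_bernoulliPoly_four_nonneg {x : ℝ} (hx : 0 ≤ x)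
    (hB : 0 ≤ bernoulliPoly 4 x) : 1 / 6 < x := by
  by_contra! hle
  have hB_le : bernoulliPoly 4 x ≤ bernoulliPoly 4 (1 / 6) :=
    monotoneOn_bernoulliPoly_four ⟨hx, by linarith⟩ ⟨by norm_num, by norm_num⟩ hle
  have hB_neg : bernoulliPoly 4 (1 / 6) < 0 := by rw [bernoulliPoly_four]; norm_num
  linarith

end BernoulliPolynomial

section Estimates

open Real

lemma abs_sin_mul_nat_le (x : ℝ) (n : ℕ) : |sin (x * n)| ≤ n * |sin x| := by
  induction n with
  | zero => simp
  | succ k ih =>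
    rw [Nat.cast_succ, mul_add_one, sin_add]
    calc |sin (x * k) * cos x + cos (x * k) * sin x|
        ≤ |sin (x * k)| * |cos x| + |cos (x * k)| * |sin x| := by
          rw [← abs_mul, ← abs_mul]
          exact abs_add_le _ _
      _ ≤ |sin (x * k)| * 1 + 1 * |sin x| := by
          gcongr <;> exact abs_cos_le_one _
      _ ≤ (k + 1) * |sin x| := by linarith

lemma one_div_rpow_sub_one_div_rpow_le {x : ℝ} (hx : 0 < x) (s t : ℝ) :
    1 / x ^ s - 1 / x ^ t ≤ (t - s) * log x / x ^ s := by
  have hexp : 1 - (t - s) * log x ≤ x ^ (s - t) := by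
    rw [rpow_def_of_pos hx]
    linarith [add_one_le_exp (log x * (s - t))]
  have hsplit : 1 / x ^ t = x ^ (s - t) / x ^ s := by
    rw [rpow_sub hx]
    field_simp
  rw [hsplit, ← sub_div]
  gcongr
  linarith

lemma log_le_half {x : ℝ} (hx : 0 < x) : log x ≤ x / 2 := by
  have h := log_le_sub_one_of_pos (half_pos hx)
  rw [log_div hx.ne' two_ne_zero] at h
  linarith [log_two_lt_d9]

lemma abs_one_div_rpow_sub_one_div_rpow_le {x s t : ℝ} (hx : 1 ≤ x) (hst : s ≤ t) :
    |1 / x ^ s - 1 / x ^ t| ≤ (t - s) / 2 / x ^ (s - 1) := by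
  have hx₀ : 0 < x := by linarith
  have hdiff : 0 ≤ 1 / x ^ s - 1 / x ^ t :=
    sub_nonneg.mpr <| one_div_le_one_div_of_le (by positivity) <|
      rpow_le_rpow_of_exponent_le hx hst
  calc |1 / x ^ s - 1 / x ^ t| = 1 / x ^ s - 1 / x ^ t := abs_of_nonneg hdiff
    _ ≤ (t - s) * log x / x ^ s := one_div_rpow_sub_one_div_rpow_le hx₀ s t
    _ ≤ (t - s) * (x / 2) / x ^ s := by
        gcongr
        exact log_le_half hx₀
    _ = (t - s) / 2 / x ^ (s - 1) := by
        rw [rpow_sub_one hx₀.ne']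
        field_simp

lemma one_div_rpow_le_two_rpow_mul_one_div_sq {x r : ℝ} (hx : 2 ≤ x) (hr : 2 ≤ r) :
    1 / x ^ r ≤ 2 ^ (2 - r) * (1 / x ^ 2) := by
  have hx₀ : 0 < x := by linarith
  calc 1 / x ^ r = x ^ (2 - r) * (1 / x ^ 2) := by
        rw [rpow_sub hx₀, rpow_two]
        field_simp
    _ ≤ 2 ^ (2 - r) * (1 / x ^ 2) := by
        gcongr ?_ * _
        exact rpow_le_rpow_of_nonpos two_pos hx (by linarith)

lemma abs_sub_apply_one_le_of_hasSum {f : ℕ → ℝ} {A K r : ℝ} (hr : 2 ≤ r) (hf : HasSum f A)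
    (hf₀ : f 0 = 0) (hK : ∀ n : ℕ, 2 ≤ n → |f n| ≤ K / n ^ r) :
    |A - f 1| ≤ K * 2 ^ (2 - r) * (π ^ 2 / 6 - 1) := by
  have hK₀ : 0 ≤ K := by
    have h := (abs_nonneg _).trans (hK 2 le_rfl)
    contrapose! h
    exact div_neg_of_neg_of_pos h (by positivity)
  have hf_tail : HasSum (fun n ↦ f (n + 2)) (A - f 1) := by
    simpa [Finset.sum_range_succ, hf₀] using (hasSum_nat_add_iff' 2).mpr hf
  have hzeta_tail : HasSum (fun n : ℕ ↦ 1 / ((n + 2 : ℕ) : ℝ) ^ 2) (π ^ 2 / 6 - 1) := by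
    simpa [Finset.sum_range_succ] using (hasSum_nat_add_iff' 2).mpr hasSum_zeta_two
  refine hf_tail.norm_le_of_bounded (hzeta_tail.mul_left (K * 2 ^ (2 - r))) fun n ↦ ?_
  have hn : (2 : ℝ) ≤ (n + 2 : ℕ) := by simp
  calc ‖f (n + 2)‖ ≤ K * (1 / ((n + 2 : ℕ) : ℝ) ^ r) := by
        rw [mul_one_div]
        exact hK (n + 2) (by simp)
    _ ≤ K * (2 ^ (2 - r) * (1 / ((n + 2 : ℕ) : ℝ) ^ 2)) := by
        gcongr
        exact one_div_rpow_le_two_rpow_mul_one_div_sq hn hr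
    _ = K * 2 ^ (2 - r) * (1 / ((n + 2 : ℕ) : ℝ) ^ 2) := by ring

end Estimates

section TrigonometricSeries

open Real

/-- The cosine Dirichlet series `∑ cos (2 π a n) / n ^ s` at a real exponent `s`. For `s ≠ 0` the
term `n = 0` vanishes, as `x / 0 = 0`. -/
noncomputable def cosSeries (a s : ℝ) : ℝ :=
  ∑' n : ℕ, cos (2 * π * a * n) / (n : ℝ) ^ s

/-- The sine Dirichlet series `∑ sin (2 π a n) / n ^ s` at a real exponent `s`. -/
noncomputable def sinSeries (a s : ℝ) : ℝ :=
  ∑' n : ℕ, sin (2 * π * a * n) / (n : ℝ) ^ s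

variable (a : ℝ) {s : ℝ}

lemma summable_div_nat_rpow_of_abs_le_one {u : ℕ → ℝ} (hu : ∀ n, |u n| ≤ 1) (hs : 1 < s) :
    Summable fun n : ℕ ↦ u n / (n : ℝ) ^ s := by
  refine .of_norm_bounded (summable_one_div_nat_rpow.mpr hs) fun n ↦ ?_
  rw [norm_eq_abs, abs_div, abs_of_nonneg (by positivity : 0 ≤ (n : ℝ) ^ s)]
  gcongr
  exact hu n

lemma hasSum_cosSeries (hs : 1 < s) :
    HasSum (fun n : ℕ ↦ cos (2 * π * a * n) / (n : ℝ) ^ s) (cosSeries a s) :=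
  (summable_div_nat_rpow_of_abs_le_one (fun _ ↦ abs_cos_le_one _) hs).hasSum

lemma hasSum_sinSeries (hs : 1 < s) :
    HasSum (fun n : ℕ ↦ sin (2 * π * a * n) / (n : ℝ) ^ s) (sinSeries a s) :=
  (summable_div_nat_rpow_of_abs_le_one (fun _ ↦ abs_sin_le_one _) hs).hasSum

lemma cosZeta_ofReal (hs : 1 < s) : cosZeta a (s : ℂ) = cosSeries a s := by
  refine (hasSum_nat_cosZeta a (s := s) (by simpa using hs)).unique ?_
  convert! Complex.hasSum_ofReal.mpr (hasSum_cosSeries a hs) using 2 with n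
  rw [Complex.ofReal_div, Complex.ofReal_cpow n.cast_nonneg, Complex.ofReal_natCast]

lemma sinZeta_ofReal (hs : 1 < s) : sinZeta a (s : ℂ) = sinSeries a s := by
  refine (hasSum_nat_sinZeta a (s := s) (by simpa using hs)).unique ?_
  convert! Complex.hasSum_ofReal.mpr (hasSum_sinSeries a hs) using 2 with n
  rw [Complex.ofReal_div, Complex.ofReal_cpow n.cast_nonneg, Complex.ofReal_natCast]

lemma hurwitzZeta_one_sub_ofReal (hs : 1 < s) :
    hurwitzZeta (a : UnitAddCircle) (1 - s) =
      ((2 * (2 * π) ^ (-s) * Gamma s * (cos (π * s / 2) * cosSeries a s +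
        sin (π * s / 2) * sinSeries a s) : ℝ) : ℂ) := by
  have hs_ne_neg (n : ℕ) : (s : ℂ) ≠ -n := by
    have hs_ne : s ≠ -(n : ℝ) := by linarith [n.cast_nonneg (α := ℝ)]
    exact_mod_cast hs_ne
  have hs_ne_one : (s : ℂ) ≠ 1 := mod_cast hs.ne'
  have hpow : (2 * π : ℂ) ^ (-s : ℂ) = ((2 * π) ^ (-s) : ℝ) := by
    rw [Complex.ofReal_cpow two_pi_pos.le]
    push_cast
    rfl
  rw [hurwitzZeta, hurwitzZetaEven_one_sub _ hs_ne_neg (.inr hs_ne_one),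
    hurwitzZetaOdd_one_sub _ hs_ne_neg, cosZeta_ofReal a hs, sinZeta_ofReal a hs,
    Complex.Gamma_ofReal, hpow]
  push_cast
  ring

lemma cosSeries_two_mul_nat {a : ℝ} (ha : a ∈ Icc 0 1) {k : ℕ} (hk : k ≠ 0) :
    cosSeries a (2 * k : ℕ) = (-1) ^ (k + 1) * (2 * π) ^ (2 * k) / 2 / (2 * k).factorial *
      bernoulliPoly (2 * k) a := by
  have h := hasSum_one_div_nat_pow_mul_cos hk ha
  rw [Polynomial.eval_map_algebraMap] at h
  rw [bernoulliPoly, ← h.tsum_eq, cosSeries]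
  refine tsum_congr fun n ↦ ?_
  rw [rpow_natCast, one_div_mul_eq_div, mul_right_comm]

lemma abs_cosSeries_sub_cos_le (hs : 2 ≤ s) :
    |cosSeries a s - cos (2 * π * a)| ≤ 2 ^ (2 - s) * (π ^ 2 / 6 - 1) := by
  have h := abs_sub_apply_one_le_of_hasSum (K := 1) hs (hasSum_cosSeries a (by linarith))
    (by simp [zero_rpow (by linarith : s ≠ 0)]) fun n _ ↦ by
      rw [abs_div, abs_of_nonneg (by positivity : 0 ≤ (n : ℝ) ^ s)]
      gcongr
      exact abs_cos_le_one _
  simpa using h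

lemma abs_sinSeries_sub_sin_le (hs : 3 ≤ s) :
    |sinSeries a s - sin (2 * π * a)| ≤
      |sin (2 * π * a)| * 2 ^ (3 - s) * (π ^ 2 / 6 - 1) := by
  have h := abs_sub_apply_one_le_of_hasSum (K := |sin (2 * π * a)|) (r := s - 1)
    (by linarith) (hasSum_sinSeries a (by linarith)) (by simp) fun n hn ↦ by
      have hn₀ : (0 : ℝ) < n := by positivity
      rw [abs_div, abs_of_nonneg (by positivity : 0 ≤ (n : ℝ) ^ s), rpow_sub_one hn₀.ne',
        div_div_eq_mul_div, mul_comm |sin _|]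
      gcongr
      exact abs_sin_mul_nat_le _ n
  rw [show 3 - s = 2 - (s - 1) by ring]
  simpa using h

lemma abs_cosSeries_sub_cosSeries_le {t : ℝ} (hs : 3 ≤ s) (hst : s ≤ t) :
    |cosSeries a s - cosSeries a t| ≤ (t - s) * 2 ^ (2 - s) * (π ^ 2 / 6 - 1) := by
  have h := abs_sub_apply_one_le_of_hasSum (K := (t - s) / 2) (r := s - 1) (by linarith)
    ((hasSum_cosSeries a (s := s) (by linarith)).sub
      (hasSum_cosSeries a (s := t) (by linarith)))
    (by simp [zero_rpow (by linarith : s ≠ 0), zero_rpow (by linarith : t ≠ 0)])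
    fun n hn ↦ by
      rw [← mul_one_div, ← mul_one_div _ ((n : ℝ) ^ t), ← mul_sub, abs_mul]
      exact (mul_le_of_le_one_left (abs_nonneg _) (abs_cos_le_one _)).trans
        (abs_one_div_rpow_sub_one_div_rpow_le (mod_cast (by lia : 1 ≤ n)) hst)
  have hpow : (2 : ℝ) ^ (2 - (s - 1)) = 2 * 2 ^ (2 - s) := by
    rw [show 2 - (s - 1) = (2 - s) + 1 by ring, rpow_add_one two_ne_zero, mul_comm]
  rw [hpow, ← mul_assoc, div_mul_cancel₀ _ two_ne_zero] at h
  simpa using h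

end TrigonometricSeries

section SignEstimates

open Real

variable {a s : ℝ}

lemma two_rpow_mul_pi_sq_div_six_sub_one_le {x : ℝ} (hx : x ≤ 0) :
    2 ^ x * (π ^ 2 / 6 - 1) ≤ 2 / 3 := by
  have hpi : π ^ 2 / 6 - 1 ≤ 2 / 3 := by nlinarith [pi_gt_three, pi_lt_d2]
  have hpow : (2 : ℝ) ^ x ≤ 1 := rpow_le_one_of_one_le_of_nonpos one_le_two hx
  nlinarith [rpow_pos_of_pos two_pos x]

lemma two_rpow_two_sub_mul_pi_sq_div_six_sub_one_le (hs : 3 ≤ s) :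
    2 ^ (2 - s) * (π ^ 2 / 6 - 1) ≤ 1 / 3 := by
  have h := two_rpow_mul_pi_sq_div_six_sub_one_le (by linarith : 3 - s ≤ 0)
  rw [show 3 - s = (2 - s) + 1 by ring, rpow_add_one two_ne_zero] at h
  linarith

lemma cosSeries_le_cos_add_one_third (hs : 3 ≤ s) :
    cosSeries a s ≤ cos (2 * π * a) + 1 / 3 := by
  have h := (abs_le.mp (abs_cosSeries_sub_cos_le a (by linarith : 2 ≤ s))).2
  linarith [two_rpow_two_sub_mul_pi_sq_div_six_sub_one_le hs]

lemma sin_div_three_le_sinSeries (hs : 3 ≤ s) (hsin : 0 ≤ sin (2 * π * a)) :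
    sin (2 * π * a) / 3 ≤ sinSeries a s := by
  have h := (abs_le.mp (abs_sinSeries_sub_sin_le a hs)).1
  rw [abs_of_nonneg hsin, mul_assoc] at h
  have hcoef := two_rpow_mul_pi_sq_div_six_sub_one_le (by linarith : 3 - s ≤ 0)
  linarith [mul_le_mul_of_nonneg_left hcoef hsin]

lemma cosSeries_four_nonpos (ha : a ∈ Icc 0 1) (hB : 0 ≤ bernoulliPoly 4 a) :
    cosSeries a 4 ≤ 0 := by
  have h : cosSeries a 4 = -((2 * π) ^ 4 / 48 * bernoulliPoly 4 a) := by
    convert! cosSeries_two_mul_nat ha two_ne_zero using 1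
    norm_num [Nat.factorial]
    ring
  rw [h, neg_nonpos]
  positivity

lemma cosSeries_le_of_bernoulliPoly_four_nonneg (ha : a ∈ Icc 0 1) (hB : 0 ≤ bernoulliPoly 4 a)
    (hs : s ∈ Icc 3 4) : cosSeries a s ≤ (4 - s) / 3 := by
  have h := (abs_le.mp (abs_cosSeries_sub_cosSeries_le a hs.1 hs.2)).2
  rw [mul_assoc] at h
  have hcoef := two_rpow_two_sub_mul_pi_sq_div_six_sub_one_le hs.1
  linarith [cosSeries_four_nonpos ha hB,
    mul_le_mul_of_nonneg_left hcoef (sub_nonneg.mpr hs.2)]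

lemma sin_two_pi_mul_nonneg (ha : a ∈ Icc 0 (1 / 2)) : 0 ≤ sin (2 * π * a) := by
  have hpi := pi_pos
  exact sin_nonneg_of_nonneg_of_le_pi (mul_nonneg (by positivity) ha.1) (by nlinarith [ha.2])

lemma three_quarters_le_sin_of_cosSeries_nonneg (ha : a ∈ Icc (1 / 6) (1 / 2)) (hs : 3 ≤ s)
    (hC : 0 ≤ cosSeries a s) : 3 / 4 ≤ sin (2 * π * a) := by
  have hpi := pi_pos
  have hcos_ge : -(1 / 3) ≤ cos (2 * π * a) := by
    linarith [cosSeries_le_cos_add_one_third (a := a) hs]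
  have hcos_le : cos (2 * π * a) ≤ 1 / 2 := by
    rw [← cos_pi_div_three]
    exact cos_le_cos_of_nonneg_of_le_pi (by positivity) (by nlinarith [ha.2])
      (by nlinarith [ha.1])
  have hsin := sin_two_pi_mul_nonneg ⟨by linarith [ha.1], ha.2⟩
  nlinarith [sin_sq_add_cos_sq (2 * π * a)]

lemma cos_mul_cosSeries_lt_sin_mul_sinSeries (ha : a ∈ Icc 0 (1 / 2))
    (hB : 0 ≤ bernoulliPoly 4 a) {δ : ℝ} (hδ : δ ∈ Ioo 0 1) :
    cos (π * δ / 2) * cosSeries a (4 - δ) <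
      sin (π * δ / 2) * sinSeries a (4 - δ) := by
  have hs : 3 ≤ 4 - δ := by linarith [hδ.2]
  have hθ_pos : 0 < π * δ / 2 := by nlinarith [pi_pos, hδ.1]
  have hθ_lt : π * δ / 2 < π / 2 := by nlinarith [pi_pos, hδ.2]
  have hcosθ : 0 < cos (π * δ / 2) :=
    cos_pos_of_mem_Ioo ⟨by linarith, hθ_lt⟩
  have hsinθ : 0 < sin (π * δ / 2) :=
    sin_pos_of_pos_of_lt_pi hθ_pos (by linarith)
  have hsin := sin_two_pi_mul_nonneg ha
  have hS := sin_div_three_le_sinSeries hs hsin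
  rcases lt_or_ge (cosSeries a (4 - δ)) 0 with hC_neg | hC_nonneg
  · calc cos (π * δ / 2) * cosSeries a (4 - δ) < 0 :=
        mul_neg_of_pos_of_neg hcosθ hC_neg
      _ ≤ sin (π * δ / 2) * sinSeries a (4 - δ) :=
        mul_nonneg hsinθ.le (by linarith)
  · have ha₆ := one_sixth_lt_of_bernoulliPoly_four_nonneg ha.1 hB
    have hsin_ge := three_quarters_le_sin_of_cosSeries_nonneg ⟨ha₆.le, ha.2⟩ hs hC_nonneg
    have hC : cosSeries a (4 - δ) ≤ δ / 3 := by
      simpa using cosSeries_le_of_bernoulliPoly_four_nonneg ⟨ha.1, by linarith [ha.2]⟩ hB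
        ⟨hs, by linarith [hδ.1]⟩
    have htan := lt_tan hθ_pos hθ_lt
    rw [tan_eq_sin_div_cos, lt_div_iff₀ hcosθ] at htan
    calc cos (π * δ / 2) * cosSeries a (4 - δ)
        ≤ cos (π * δ / 2) * (δ / 3) := by gcongr
      _ ≤ π * δ / 2 * cos (π * δ / 2) * (1 / 4) := by
        nlinarith [pi_gt_three, mul_pos hδ.1 hcosθ]
      _ < sin (π * δ / 2) * (1 / 4) := by gcongr
      _ ≤ sin (π * δ / 2) * sinSeries a (4 - δ) := by
        gcongr
        linarith

lemma cos_mul_cosSeries_add_sin_mul_sinSeries_neg (ha : a ∈ Icc 0 (1 / 2))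
    (hB : 0 ≤ bernoulliPoly 4 a) (hs : s ∈ Ioo 3 4) :
    cos (π * s / 2) * cosSeries a s +
      sin (π * s / 2) * sinSeries a s < 0 := by
  have h := cos_mul_cosSeries_lt_sin_mul_sinSeries ha hB (δ := 4 - s)
    ⟨by linarith [hs.2], by linarith [hs.1]⟩
  rw [show π * (4 - s) / 2 = 2 * π - π * s / 2 by ring, sub_sub_cancel,
    cos_two_pi_sub, sin_two_pi_sub] at h
  linarith

end SignEstimates

/-- With `b₄⁻ ∈ [0,1/2)` the root of `B₄` in that interval and `b₄⁻ ≤ a ≤ 1/2`,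
`ζ(σ, a) < 0` for every real `σ ∈ (-3, -2)`. -/
theorem hurwitzZeta_neg_on_Ioo_neg_three_neg_two (bm : ℝ)
    (hbm : bm ∈ Set.Ico (0 : ℝ) (1 / 2)) (hbm0 : bernoulliPoly 4 bm = 0)
    (a : ℝ) (ha : bm ≤ a) (ha' : a ≤ 1 / 2) :
    ∀ σ : ℝ, -3 < σ → σ < -2 →
      (hurwitzZeta (a : UnitAddCircle) (σ : ℂ)).im = 0 ∧
        (hurwitzZeta (a : UnitAddCircle) (σ : ℂ)).re < 0 := by
  intro σ hσ₃ hσ₂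
  have ha_mem : a ∈ Icc 0 (1 / 2) := ⟨hbm.1.trans ha, ha'⟩
  have hB : 0 ≤ bernoulliPoly 4 a :=
    hbm0 ▸ monotoneOn_bernoulliPoly_four (Ico_subset_Icc_self hbm) ha_mem ha
  have hneg := cos_mul_cosSeries_add_sin_mul_sinSeries_neg ha_mem hB (s := 1 - σ)
    ⟨by linarith, by linarith⟩
  have hHurwitz := hurwitzZeta_one_sub_ofReal a (by linarith : 1 < 1 - σ)
  rw [Complex.ofReal_sub, Complex.ofReal_one, sub_sub_cancel] at hHurwitz
  rw [hHurwitz]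
  refine ⟨Complex.ofReal_im _, ?_⟩
  rw [Complex.ofReal_re]
  have hGamma : 0 < Real.Gamma (1 - σ) := Real.Gamma_pos_of_pos (by linarith)
  exact mul_neg_of_pos_of_neg (by positivity) hneg
end

section
/- Let 0 < a ≤ 1 and let M ≥ 2 be an integer. Then the Hurwitz zeta function σ ↦ ζ(σ, a) has exactly one real zero in the interval [−2M−2, −2M). -/
open HurwitzZeta Set

/-!
For real `s > 1` put `F(s) = ∑ e^{2πina} n⁻ˢ`. By the functional equation `ζ(1 - s, a)` is a
positive multiple of `Re (e^{-πis/2} F(s))`, so if `F(s) ≠ 0` has argument `β(s)`, it vanishes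
exactly when the phase `(s - 1)/2 - β(s)/π` is an integer. For `s ≥ 3` the first term dominates `F`
so strongly that `F` does not vanish and has a `1`-Lipschitz argument; as `1 < π/2`, the phase is
continuous and strictly increasing. Since `|sin nx| ≤ n |sin x|`, the first term also dominates
`Im F`, whose sign therefore does not depend on `s`; hence neither does `⌊-β(s)/π⌋`, and the integer
part of the phase grows by exactly one when `s` runs from `2M + 1` to `2M + 3`.
-/

lemma abs_sin_nat_mul_le (n : ℕ) (x : ℝ) : |Real.sin (n * x)| ≤ n * |Real.sin x| := by
  induction n with
  | zero => simp
  | succ n ih =>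
    calc |Real.sin ((n + 1 : ℕ) * x)|
        = |Real.sin (n * x) * Real.cos x + Real.cos (n * x) * Real.sin x| := by
          rw [← Real.sin_add]; push_cast; ring_nf
      _ ≤ |Real.sin (n * x)| * |Real.cos x| + |Real.cos (n * x)| * |Real.sin x| := by
          simpa only [abs_mul] using
            abs_add_le (Real.sin (n * x) * Real.cos x) (Real.cos (n * x) * Real.sin x)
      _ ≤ |Real.sin (n * x)| * 1 + 1 * |Real.sin x| := by
          gcongr <;> exact Real.abs_cos_le_one _
      _ ≤ (n + 1 : ℕ) * |Real.sin x| := by push_cast; linarith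

lemma abs_rpow_neg_sub_rpow_neg_le {x s t : ℝ} (hx : 1 ≤ x) (hst : s ≤ t) :
    |x ^ (-t) - x ^ (-s)| ≤ (t - s) * Real.log x * x ^ (-s) := by
  have hx₀ : 0 < x := by linarith
  have hdecay : 1 - (t - s) * Real.log x ≤ x ^ (-(t - s)) := by
    rw [Real.rpow_def_of_pos hx₀, mul_neg, mul_comm (Real.log x)]
    exact Real.one_sub_le_exp_neg _
  have hsplit : x ^ (-t) = x ^ (-(t - s)) * x ^ (-s) := by
    rw [← Real.rpow_add hx₀]; ring_nf
  rw [abs_sub_comm, abs_of_nonneg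
    (sub_nonneg.2 (Real.rpow_le_rpow_of_exponent_le hx (neg_le_neg hst))), hsplit]
  nlinarith [Real.rpow_pos_of_pos hx₀ (-s)]

lemma self_mul_rpow_neg_le_one_div_sq {x s : ℝ} (hx : 1 ≤ x) (hs : 3 ≤ s) :
    x * x ^ (-s) ≤ 1 / x ^ 2 := by
  have hx₀ : 0 < x := by linarith
  calc x * x ^ (-s) = x ^ (1 - s) := by rw [sub_eq_add_neg, Real.rpow_add hx₀, Real.rpow_one]
    _ ≤ x ^ (-2 : ℝ) := Real.rpow_le_rpow_of_exponent_le hx (by linarith)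
    _ = 1 / x ^ 2 := by rw [Real.rpow_neg hx₀.le, Real.rpow_two, one_div]

lemma sign_eq_sign_of_abs_sub_le {x y c : ℝ} (hc : c < 1) (h : |x - y| ≤ c * |y|) :
    SignType.sign x = SignType.sign y := by
  obtain ⟨hl, hu⟩ := abs_le.1 h
  rcases lt_trichotomy y 0 with hy | rfl | hy
  · rw [abs_of_neg hy] at hu
    rw [sign_neg hy, sign_neg (by nlinarith)]
  · simp_all
  · rw [abs_of_pos hy] at hl
    rw [sign_pos hy, sign_pos (by nlinarith)]

lemma floor_le_floor_of_sign_sin_pi_mul_eq {x y : ℝ} (hxy : |x - y| < 1)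
    (hsign : SignType.sign (Real.sin (Real.pi * x)) = SignType.sign (Real.sin (Real.pi * y))) :
    ⌊y⌋ ≤ ⌊x⌋ := by
  by_contra! hlt
  set k := ⌊y⌋
  have hxk : x < k := Int.floor_lt.1 hlt
  have hky : (k : ℝ) ≤ y := Int.floor_le y
  have hyx : y - x < 1 := by linarith [(abs_lt.1 hxy).1]
  have hshift : ∀ z : ℝ, Real.sin (Real.pi * z) = (-1) ^ k * Real.sin (Real.pi * (z - k)) := by
    intro z
    rw [← Real.sin_add_int_mul_pi]; ring_nf
  have hneg : Real.sin (Real.pi * (x - k)) < 0 :=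
    Real.sin_neg_of_neg_of_neg_pi_lt (by nlinarith [Real.pi_pos]) (by nlinarith [Real.pi_pos])
  have hnonneg : 0 ≤ Real.sin (Real.pi * (y - k)) :=
    Real.sin_nonneg_of_nonneg_of_le_pi (by nlinarith [Real.pi_pos]) (by nlinarith [Real.pi_pos])
  rw [hshift x, hshift y, sign_mul, sign_mul] at hsign
  have hunit : SignType.sign ((-1 : ℝ) ^ k) ≠ 0 :=
    sign_ne_zero.2 (zpow_ne_zero k (by norm_num))
  have := mul_left_cancel₀ hunit hsign
  rw [sign_neg hneg, eq_comm, sign_eq_neg_one_iff] at this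
  exact this.not_ge hnonneg

lemma floor_eq_floor_of_sign_sin_pi_mul_eq {x y : ℝ} (hxy : |x - y| < 1)
    (hsign : SignType.sign (Real.sin (Real.pi * x)) = SignType.sign (Real.sin (Real.pi * y))) :
    ⌊x⌋ = ⌊y⌋ :=
  le_antisymm (floor_le_floor_of_sign_sin_pi_mul_eq (abs_sub_comm x y ▸ hxy) hsign.symm)
    (floor_le_floor_of_sign_sin_pi_mul_eq hxy hsign)

lemma existsUnique_mem_Ioc_eq_intCast {f : ℝ → ℝ} {p q : ℝ} (hpq : p ≤ q)
    (hcont : ContinuousOn f (Icc p q)) (hmono : StrictMonoOn f (Icc p q))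
    (hfloor : ⌊f q⌋ = ⌊f p⌋ + 1) : ∃! x, x ∈ Ioc p q ∧ ∃ k : ℤ, f x = k := by
  have hlt : f p < ⌊f q⌋ := by
    rw [hfloor]; exact_mod_cast Int.lt_floor_add_one (f p)
  obtain ⟨x, hx, hfx⟩ := intermediate_value_Ioc hpq hcont ⟨hlt, Int.floor_le (f q)⟩
  refine ⟨x, ⟨hx, _, hfx⟩, ?_⟩
  rintro y ⟨hy, k, hfy⟩
  have hlower : ⌊f p⌋ < k :=
    Int.floor_lt.2 (hfy ▸ hmono (left_mem_Icc.2 hpq) (Ioc_subset_Icc_self hy) hy.1)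
  have hupper : k ≤ ⌊f q⌋ :=
    Int.le_floor.2 (hfy ▸ hmono.monotoneOn (Ioc_subset_Icc_self hy) (right_mem_Icc.2 hpq) hy.2)
  have hk : k = ⌊f q⌋ := by omega
  exact hmono.injOn (Ioc_subset_Icc_self hy) (Ioc_subset_Icc_self hx) (by rw [hfy, hfx, hk])

lemma abs_arg_sub_arg_le {r : ℝ} (hr : r < 1) {z w : ℂ} (hz : ‖z - 1‖ ≤ r) (hw : ‖w - 1‖ ≤ r) :
    |z.arg - w.arg| ≤ (1 - r)⁻¹ * ‖z - w‖ := by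
  have hderiv : ∀ u ∈ Metric.closedBall (1 : ℂ) r,
      HasDerivWithinAt Complex.log u⁻¹ (Metric.closedBall 1 r) u := by
    intro u hu
    have := Complex.mem_slitPlane_of_norm_lt_one ((mem_closedBall_iff_norm.1 hu).trans_lt hr)
    rw [add_sub_cancel] at this
    exact (Complex.hasDerivAt_log this).hasDerivWithinAt
  have hbound : ∀ u ∈ Metric.closedBall (1 : ℂ) r, ‖u⁻¹‖ ≤ (1 - r)⁻¹ := by
    intro u hu
    have htri : ‖(1 : ℂ)‖ - ‖u‖ ≤ ‖u - 1‖ := norm_sub_rev u 1 ▸ norm_sub_norm_le 1 u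
    have hdist := mem_closedBall_iff_norm.1 hu
    rw [norm_one] at htri
    rw [norm_inv]
    exact inv_anti₀ (by linarith) (by linarith)
  calc |z.arg - w.arg| = |(Complex.log z - Complex.log w).im| := by simp [Complex.log_im]
    _ ≤ ‖Complex.log z - Complex.log w‖ := Complex.abs_im_le_norm _
    _ ≤ (1 - r)⁻¹ * ‖z - w‖ :=
        (convex_closedBall 1 r).norm_image_sub_le_of_norm_hasDerivWithin_le hderiv hbound
          (mem_closedBall_iff_norm.2 hw) (mem_closedBall_iff_norm.2 hz)

-- The constant bounds `ζ(2) - 1 = π² / 6 - 1`.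
lemma norm_sub_le_of_norm_le_div_sq {E : Type*} [NormedAddCommGroup E] {f : ℕ → E} {S : E} {K : ℝ}
    (hf : HasSum f S) (h₀ : f 0 = 0) (hK : ∀ n : ℕ, 2 ≤ n → ‖f n‖ ≤ K * (1 / (n : ℝ) ^ 2)) :
    ‖S - f 1‖ ≤ 2 / 3 * K := by
  have htail := (hasSum_nat_add_iff' 2).2 hf
  have hzeta := (hasSum_nat_add_iff' 2).2 (hasSum_zeta_two.mul_left K)
  have hnorm := htail.norm_le_of_bounded hzeta fun n ↦ hK (n + 2) (Nat.le_add_left 2 n)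
  simp only [Finset.sum_range_succ, Finset.sum_range_zero, h₀, zero_add, Nat.cast_zero,
    Nat.cast_one, zero_pow two_ne_zero, one_pow, div_zero, div_one, mul_zero, mul_one] at hnorm
  have hK₀ : 0 ≤ K :=
    nonneg_of_mul_nonneg_left ((norm_nonneg _).trans (hK 2 le_rfl)) (by positivity)
  have hpi : Real.pi ^ 2 ≤ 10 := by nlinarith [Real.pi_lt_d2, Real.pi_pos]
  nlinarith

section ExpZeta

variable (a : ℝ) {s t : ℝ}

lemma hasSum_expZeta_ofReal (hs : 1 < s) :
    HasSum (fun n : ℕ ↦ ((n : ℝ) ^ (-s)) • Complex.exp ((n * (2 * Real.pi * a) : ℝ) * Complex.I))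
      (expZeta a s) := by
  refine (hasSum_expZeta_of_one_lt_re a (s := s) hs).congr_fun fun n ↦ ?_
  rw [Complex.real_smul, Complex.ofReal_cpow n.cast_nonneg, Complex.ofReal_neg, Complex.cpow_neg,
    div_eq_inv_mul, Complex.ofReal_natCast]
  push_cast
  ring_nf

lemma conj_expZeta_ofReal (hs : 1 < s) :
    starRingEnd ℂ (expZeta a s) = expZeta (-a : UnitAddCircle) s := by
  have hneg := hasSum_expZeta_ofReal (-a) hs
  rw [AddCircle.coe_neg] at hneg
  refine ((Complex.hasSum_conj'.2 (hasSum_expZeta_ofReal a hs)).congr_fun fun n ↦ ?_).unique hneg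
  simp [← Complex.exp_conj, map_ofNat]

lemma hurwitzZeta_one_sub_ofReal_s15 (hs : 1 < s) :
    hurwitzZeta a (1 - s : ℝ) = (2 * Real.pi : ℂ) ^ (-s : ℂ) * Complex.Gamma s *
      (2 * (Complex.exp ((-(Real.pi * s / 2) : ℝ) * Complex.I) * expZeta a s).re : ℝ) := by
  have hs_neg : ∀ n : ℕ, (s : ℂ) ≠ -n := by
    intro n h
    have : s = -n := by exact_mod_cast h
    linarith [n.cast_nonneg (α := ℝ)]
  have hs_one : (s : ℂ) ≠ 1 := by exact_mod_cast hs.ne'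
  rw [Complex.ofReal_sub, Complex.ofReal_one, hurwitzZeta_one_sub _ hs_neg (Or.inr hs_one),
    ← Complex.add_conj, map_mul, conj_expZeta_ofReal a hs, ← Complex.exp_conj]
  simp only [map_mul, Complex.conj_I, Complex.conj_ofReal]
  push_cast
  ring_nf

lemma hurwitzZeta_one_sub_eq_zero_iff (hs : 1 < s) :
    hurwitzZeta a (1 - s : ℝ) = 0 ↔
      (Complex.exp ((-(Real.pi * s / 2) : ℝ) * Complex.I) * expZeta a s).re = 0 := by
  have hpow : (2 * Real.pi : ℂ) ^ (-s : ℂ) ≠ 0 := by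
    simp [Complex.cpow_eq_zero_iff, Real.pi_ne_zero]
  have hGamma : Complex.Gamma s ≠ 0 := Complex.Gamma_ne_zero_of_re_pos (by simpa using by linarith)
  rw [hurwitzZeta_one_sub_ofReal_s15 a hs, mul_eq_zero, or_iff_right (mul_ne_zero hpow hGamma),
    Complex.ofReal_eq_zero, mul_eq_zero, or_iff_right two_ne_zero]

lemma norm_expZeta_sub_exp_le (hs : 3 ≤ s) :
    ‖expZeta a s - Complex.exp ((2 * Real.pi * a : ℝ) * Complex.I)‖ ≤ 1 / 3 := by
  have htail := norm_sub_le_of_norm_le_div_sq (K := 1 / 2)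
    (hasSum_expZeta_ofReal a (by linarith : 1 < s))
    (by simp [Real.zero_rpow (by linarith : -s ≠ 0)]) fun n hn ↦ ?_
  · simpa using htail.trans_eq (by norm_num : (2 / 3 * (1 / 2) : ℝ) = 1 / 3)
  · have hn₂ : (2 : ℝ) ≤ n := by exact_mod_cast hn
    have hterm := self_mul_rpow_neg_le_one_div_sq (by linarith : 1 ≤ (n : ℝ)) hs
    have hpos : 0 ≤ (n : ℝ) ^ (-s) := by positivity
    rw [norm_smul, Complex.norm_exp_ofReal_mul_I, Real.norm_of_nonneg hpos]
    nlinarith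

lemma norm_expZeta_sub_expZeta_le (hs : 3 ≤ s) (hst : s ≤ t) :
    ‖expZeta a t - expZeta a s‖ ≤ 2 / 3 * (t - s) := by
  have htail := norm_sub_le_of_norm_le_div_sq (K := t - s)
    ((hasSum_expZeta_ofReal a (by linarith : 1 < t)).sub
      (hasSum_expZeta_ofReal a (by linarith : 1 < s)))
    (by simp [Real.zero_rpow (by linarith : -s ≠ 0), Real.zero_rpow (by linarith : -t ≠ 0)])
    fun n hn ↦ ?_
  · simpa using htail
  · have hn₁ : (1 : ℝ) ≤ n := by exact_mod_cast (by omega : 1 ≤ n)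
    have hst₀ : 0 ≤ t - s := sub_nonneg.2 hst
    rw [← sub_smul, norm_smul, Complex.norm_exp_ofReal_mul_I, mul_one, Real.norm_eq_abs]
    calc |(n : ℝ) ^ (-t) - (n : ℝ) ^ (-s)|
        ≤ (t - s) * Real.log n * (n : ℝ) ^ (-s) := abs_rpow_neg_sub_rpow_neg_le hn₁ hst
      _ ≤ (t - s) * n * (n : ℝ) ^ (-s) := by gcongr; exact Real.log_le_self (by linarith)
      _ = (t - s) * (n * (n : ℝ) ^ (-s)) := mul_assoc _ _ _
      _ ≤ (t - s) * (1 / (n : ℝ) ^ 2) :=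
          mul_le_mul_of_nonneg_left (self_mul_rpow_neg_le_one_div_sq hn₁ hs) hst₀

lemma abs_im_expZeta_sub_sin_le (hs : 3 ≤ s) :
    |(expZeta a s).im - Real.sin (2 * Real.pi * a)| ≤ 2 / 3 * |Real.sin (2 * Real.pi * a)| := by
  have hsum := Complex.hasSum_im (hasSum_expZeta_ofReal a (by linarith : 1 < s))
  simp only [Complex.smul_im, Complex.exp_ofReal_mul_I_im, smul_eq_mul] at hsum
  have htail := norm_sub_le_of_norm_le_div_sq (K := |Real.sin (2 * Real.pi * a)|) hsum
    (by simp) fun n hn ↦ ?_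
  · simpa using htail
  · have hn₁ : (1 : ℝ) ≤ n := by exact_mod_cast (by omega : 1 ≤ n)
    have hpos : 0 ≤ (n : ℝ) ^ (-s) := by positivity
    rw [Real.norm_eq_abs, abs_mul, abs_of_nonneg hpos]
    calc (n : ℝ) ^ (-s) * |Real.sin (n * (2 * Real.pi * a))|
        ≤ (n : ℝ) ^ (-s) * (n * |Real.sin (2 * Real.pi * a)|) := by
          gcongr; exact abs_sin_nat_mul_le _ _
      _ = |Real.sin (2 * Real.pi * a)| * (n * (n : ℝ) ^ (-s)) := by ring
      _ ≤ |Real.sin (2 * Real.pi * a)| * (1 / (n : ℝ) ^ 2) := by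
          gcongr; exact self_mul_rpow_neg_le_one_div_sq hn₁ hs

lemma sign_im_expZeta (hs : 3 ≤ s) :
    SignType.sign (expZeta a s).im = SignType.sign (Real.sin (2 * Real.pi * a)) :=
  sign_eq_sign_of_abs_sub_le (by norm_num) (abs_im_expZeta_sub_sin_le a hs)

end ExpZeta

section Phase

/-- The ratio `e^{-2πia} ∑ e^{2πina} n⁻ˢ` of the exponential zeta function to the first term of its
Dirichlet series. -/
noncomputable def expZetaRatio (a s : ℝ) : ℂ :=
  Complex.exp ((-(2 * Real.pi * a) : ℝ) * Complex.I) * expZeta a s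

/-- The argument of the exponential zeta function measured from the argument `2πa` of its first
term. For `s ≥ 3` this branch, unlike `Complex.arg (expZeta a s)`, is continuous in `s`. -/
noncomputable def expZetaArg (a s : ℝ) : ℝ := 2 * Real.pi * a + (expZetaRatio a s).arg

/-- The phase of the Hurwitz zeta function, reflected by `s ↦ 1 - s` and normalised so that, for
`s ≥ 3`, it is an integer exactly when `hurwitzZeta a` vanishes at `1 - s`. -/
noncomputable def hurwitzPhase (a s : ℝ) : ℝ := (s - 1) / 2 - expZetaArg a s / Real.pi

variable (a : ℝ) {s t : ℝ}

lemma expZeta_eq_exp_mul_expZetaRatio :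
    expZeta a s = Complex.exp ((2 * Real.pi * a : ℝ) * Complex.I) * expZetaRatio a s := by
  rw [expZetaRatio, ← mul_assoc, ← Complex.exp_add, ← add_mul]
  simp

lemma norm_expZetaRatio_sub_one_le (hs : 3 ≤ s) : ‖expZetaRatio a s - 1‖ ≤ 1 / 3 := by
  simpa only [expZeta_eq_exp_mul_expZetaRatio, ← mul_sub_one, norm_mul,
    Complex.norm_exp_ofReal_mul_I, one_mul] using norm_expZeta_sub_exp_le a hs

lemma norm_expZetaRatio_sub_expZetaRatio_le (hs : 3 ≤ s) (hst : s ≤ t) :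
    ‖expZetaRatio a t - expZetaRatio a s‖ ≤ 2 / 3 * (t - s) := by
  simpa only [expZeta_eq_exp_mul_expZetaRatio, ← mul_sub, norm_mul,
    Complex.norm_exp_ofReal_mul_I, one_mul] using norm_expZeta_sub_expZeta_le a hs hst

lemma abs_expZetaArg_sub_expZetaArg_le (hs : 3 ≤ s) (hst : s ≤ t) :
    |expZetaArg a t - expZetaArg a s| ≤ t - s := by
  have harg := abs_arg_sub_arg_le (by norm_num) (norm_expZetaRatio_sub_one_le a (hs.trans hst))
    (norm_expZetaRatio_sub_one_le a hs)
  rw [expZetaArg, expZetaArg, add_sub_add_left_eq_sub]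
  linarith [norm_expZetaRatio_sub_expZetaRatio_le a hs hst]

lemma abs_expZetaArg_sub_two_pi_mul_le (hs : 3 ≤ s) :
    |expZetaArg a s - 2 * Real.pi * a| ≤ 1 / 2 := by
  have harg := abs_arg_sub_arg_le (by norm_num) (norm_expZetaRatio_sub_one_le a hs)
    (w := 1) (by simp)
  rw [Complex.arg_one, sub_zero] at harg
  rw [expZetaArg, add_sub_cancel_left]
  linarith [norm_expZetaRatio_sub_one_le a hs]

lemma norm_expZeta_mul_exp_expZetaArg :
    ‖expZeta a s‖ * Complex.exp (expZetaArg a s * Complex.I) = expZeta a s := by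
  have hpolar := Complex.norm_mul_exp_arg_mul_I (expZetaRatio a s)
  rw [expZeta_eq_exp_mul_expZetaRatio, norm_mul, Complex.norm_exp_ofReal_mul_I, one_mul,
    expZetaArg, Complex.ofReal_add, add_mul, Complex.exp_add, mul_left_comm, hpolar]

lemma norm_expZeta_pos (hs : 3 ≤ s) : 0 < ‖expZeta a s‖ := by
  have htri := norm_sub_norm_le (Complex.exp ((2 * Real.pi * a : ℝ) * Complex.I)) (expZeta a s)
  rw [Complex.norm_exp_ofReal_mul_I, norm_sub_rev] at htri
  linarith [norm_expZeta_sub_exp_le a hs]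

lemma sign_sin_expZetaArg (hs : 3 ≤ s) :
    SignType.sign (Real.sin (expZetaArg a s)) = SignType.sign (Real.sin (2 * Real.pi * a)) := by
  have him : (expZeta a s).im = ‖expZeta a s‖ * Real.sin (expZetaArg a s) := by
    conv_lhs => rw [← norm_expZeta_mul_exp_expZetaArg, Complex.im_ofReal_mul,
      Complex.exp_ofReal_mul_I_im]
  rw [← sign_im_expZeta a hs, him, sign_mul, sign_pos (norm_expZeta_pos a hs), one_mul]

lemma floor_neg_expZetaArg_div_pi (hs : 3 ≤ s) :
    ⌊-(expZetaArg a s / Real.pi)⌋ = ⌊-(2 * a)⌋ := by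
  have hpi := Real.pi_pos
  apply floor_eq_floor_of_sign_sin_pi_mul_eq
  · have hdiff : -(expZetaArg a s / Real.pi) - -(2 * a) =
        -((expZetaArg a s - 2 * Real.pi * a) / Real.pi) := by field_simp; ring
    rw [hdiff, abs_neg, abs_div, abs_of_pos hpi, div_lt_one hpi]
    linarith [abs_expZetaArg_sub_two_pi_mul_le a hs, Real.pi_gt_three]
  · have harg : Real.pi * -(expZetaArg a s / Real.pi) = -expZetaArg a s := by field_simp
    have hfirst : Real.pi * -(2 * a) = -(2 * Real.pi * a) := by ring
    rw [harg, hfirst, Real.sin_neg, Real.sin_neg, Left.sign_neg, Left.sign_neg,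
      sign_sin_expZetaArg a hs]

lemma hurwitzZeta_one_sub_eq_zero_iff_hurwitzPhase (hs : 3 ≤ s) :
    hurwitzZeta a (1 - s : ℝ) = 0 ↔ ∃ k : ℤ, hurwitzPhase a s = k := by
  have hre : (Complex.exp ((-(Real.pi * s / 2) : ℝ) * Complex.I) * expZeta a s).re =
      ‖expZeta a s‖ * Real.cos (Real.pi * s / 2 - expZetaArg a s) := by
    rw [← Real.cos_neg, neg_sub, sub_eq_neg_add, ← Complex.exp_ofReal_mul_I_re,
      ← Complex.re_ofReal_mul, Complex.ofReal_add, add_mul, Complex.exp_add, mul_left_comm,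
      norm_expZeta_mul_exp_expZetaArg]
  rw [hurwitzZeta_one_sub_eq_zero_iff a (by linarith), hre, mul_eq_zero,
    or_iff_right (norm_expZeta_pos a hs).ne', Real.cos_eq_zero_iff]
  refine exists_congr fun k ↦ ?_
  rw [hurwitzPhase]
  field_simp
  constructor <;> intro h <;> linarith

lemma strictMonoOn_hurwitzPhase : StrictMonoOn (hurwitzPhase a) (Ici 3) := by
  intro s hs t _ hst
  have harg := (abs_le.1 (abs_expZetaArg_sub_expZetaArg_le a hs hst.le)).2
  have hslope : (expZetaArg a t - expZetaArg a s) / Real.pi < (t - s) / 2 := by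
    rw [div_lt_div_iff₀ Real.pi_pos two_pos]
    nlinarith [Real.pi_gt_three]
  rw [sub_div] at hslope
  rw [hurwitzPhase, hurwitzPhase]
  linarith

lemma continuousOn_expZetaArg : ContinuousOn (expZetaArg a) (Ici 3) := by
  refine (LipschitzOnWith.of_le_add_mul 1 fun t ht s hs ↦ ?_).continuousOn
  rw [NNReal.coe_one, one_mul, Real.dist_eq]
  rcases le_total s t with hst | hts
  · linarith [abs_le.1 (abs_expZetaArg_sub_expZetaArg_le a hs hst), le_abs_self (t - s)]
  · linarith [abs_le.1 (abs_expZetaArg_sub_expZetaArg_le a ht hts), neg_le_abs (t - s)]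

lemma continuousOn_hurwitzPhase : ContinuousOn (hurwitzPhase a) (Ici 3) :=
  ContinuousOn.sub (by fun_prop) ((continuousOn_expZetaArg a).div_const _)

lemma floor_hurwitzPhase_two_mul_add_one {N : ℤ} (hN : 1 ≤ N) :
    ⌊hurwitzPhase a (2 * N + 1)⌋ = N + ⌊-(2 * a)⌋ := by
  have hN' : (1 : ℝ) ≤ N := by exact_mod_cast hN
  rw [hurwitzPhase, add_sub_cancel_right, mul_div_cancel_left₀ _ two_ne_zero, sub_eq_add_neg,
    Int.floor_intCast_add, floor_neg_expZetaArg_div_pi a (by linarith)]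

end Phase

theorem hurwitzZeta_exactly_one_zero_in_Ico_general (a : UnitAddCircle) (M : ℤ) (hM : 1 ≤ M) :
    ∃! σ : ℝ, σ ∈ Ico (-2 * (M : ℝ) - 2) (-2 * (M : ℝ)) ∧ hurwitzZeta a (σ : ℂ) = 0 := by
  obtain ⟨a, rfl⟩ := QuotientAddGroup.mk_surjective a
  have hM' : (1 : ℝ) ≤ M := by exact_mod_cast hM
  have hsub : Icc (2 * (M : ℝ) + 1) (2 * (M + 1 : ℤ) + 1) ⊆ Ici 3 :=
    fun s hs ↦ mem_Ici.2 (by linarith [hs.1])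
  have hphase := existsUnique_mem_Ioc_eq_intCast (by push_cast; linarith)
    ((continuousOn_hurwitzPhase a).mono hsub) ((strictMonoOn_hurwitzPhase a).mono hsub)
    (by rw [floor_hurwitzPhase_two_mul_add_one a hM,
      floor_hurwitzPhase_two_mul_add_one a (by omega)]; ring)
  refine ((Equiv.subLeft (1 : ℝ)).existsUnique_congr fun s ↦ ?_).1 hphase
  have hreflect : s ∈ Ioc (2 * (M : ℝ) + 1) (2 * (M + 1 : ℤ) + 1) ↔
      1 - s ∈ Ico (-2 * (M : ℝ) - 2) (-2 * (M : ℝ)) := by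
    push_cast
    constructor <;> rintro ⟨h₁, h₂⟩ <;> constructor <;> linarith
  rw [Equiv.subLeft_apply, ← hreflect]
  exact and_congr_right fun hs ↦
    (hurwitzZeta_one_sub_eq_zero_iff_hurwitzPhase a (hsub (Ioc_subset_Icc_self hs))).symm

/-- For `0 < a ≤ 1` and an integer `M ≥ 2`, the Hurwitz zeta function `σ ↦ ζ(σ, a)` has
exactly one real zero in the interval `[-2M-2, -2M)`. -/
theorem hurwitzZeta_exactly_one_zero_in_Ico (a : ℝ) (ha : 0 < a) (ha' : a ≤ 1)
    (M : ℤ) (hM : 2 ≤ M) :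
    ∃! σ : ℝ, σ ∈ Set.Ico (-2 * (M : ℝ) - 2) (-2 * (M : ℝ)) ∧
      hurwitzZeta (a : UnitAddCircle) (σ : ℂ) = 0 :=
  hurwitzZeta_exactly_one_zero_in_Ico_general a M (by omega)
end

section
/- Let 0 < a ≤ 1 and s = σ + it ∈ ℂ with σ ≤ −(4a + 1 + 2⌊1 − 2a⌋) and |t| ≤ 1. If ζ(s, a) = 0 then t = 0 (the zero lies on the negative real axis); moreover, for each integer n ≥ 1 − 2a the Hurwitz zeta function has exactly one real zero in the interval (−2n − 4a − 1, −2n − 4a + 1). -/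
open HurwitzZeta Set

/-!
By Hurwitz's formula, the zeros of `ζ(1 - w, a)` with `Re w > 1` are those of
`∑ cos (πw/2 - 2πam) m⁻ʷ`. On the strip of width `2` centred at `c = 4a + 2n + 1` the term `m = 1`
is `± sin (π/2 (w - c))`, and the remaining terms add up to at most
`2 ^ (2 - Re w) (π²/6 - 1) cosh (π/2 Im w)`. Since `‖sin (x + iy)‖² = cosh² y - cos² x`, a zero has
`cos x` bounded below by a multiple of `cosh y`. This first gives `|Re w - c| ≤ 1/2`, hence
`Re w ≥ 5/2`, and the improved tail bound then gives `cos x ≥ 0.8899 cosh y`. On that region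
`sin` expands distances by more than the Lipschitz constant of the tail, so the strip contains at
most one zero, and the intermediate value theorem on its real points provides a real one.
-/

namespace Spira

open scoped Real

theorem norm_sin_sq (z : ℂ) :
    ‖Complex.sin z‖ ^ 2 = Real.cosh z.im ^ 2 - Real.cos z.re ^ 2 := by
  rw [Complex.sq_norm, Complex.sin_eq, Complex.normSq_apply]
  simp only [← Complex.ofReal_cos, ← Complex.ofReal_sin, ← Complex.ofReal_cosh,
    ← Complex.ofReal_sinh, ← Complex.ofReal_mul, Complex.add_re, Complex.add_im,
    Complex.re_ofReal_mul, Complex.im_ofReal_mul, Complex.ofReal_re, Complex.ofReal_im,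
    Complex.I_re, Complex.I_im]
  linear_combination Real.cosh z.im ^ 2 * Real.sin_sq_add_cos_sq z.re -
    Real.cos z.re ^ 2 * Real.cosh_sq z.im

theorem norm_sin_le_cosh (z : ℂ) : ‖Complex.sin z‖ ≤ Real.cosh z.im := by
  refine le_of_sq_le_sq ?_ (Real.cosh_pos _).le
  rw [norm_sin_sq]
  exact sub_le_self _ (sq_nonneg _)

theorem norm_cos_le_cosh (z : ℂ) : ‖Complex.cos z‖ ≤ Real.cosh z.im := by
  simpa [Complex.sin_add_pi_div_two] using norm_sin_le_cosh (z + π / 2)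

theorem norm_cos_sub_one (z : ℂ) : ‖Complex.cos z - 1‖ = Real.cosh z.im - Real.cos z.re := by
  obtain ⟨u, rfl⟩ : ∃ u, z = (2 : ℝ) * u := ⟨z / 2, by push_cast; ring⟩
  have hcos : Complex.cos ((2 : ℝ) * u) - 1 = -2 * Complex.sin u ^ 2 := by
    push_cast
    rw [Complex.cos_two_mul]
    linear_combination 2 * Complex.sin_sq_add_cos_sq u
  rw [hcos, norm_mul, norm_pow, norm_sin_sq, Complex.re_ofReal_mul, Complex.im_ofReal_mul,
    Real.cos_two_mul, Real.cosh_two_mul, norm_neg, RCLike.norm_ofNat]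
  linear_combination Real.cosh_sq u.im

theorem convex_setOf_cosh_le (C : ℝ) : Convex ℝ {x : ℝ | Real.cosh x ≤ C} := by
  rw [convex_iff_ordConnected]
  refine ⟨fun x hx y hy z hz => ?_⟩
  rcases le_max_iff.1 (abs_le_max_abs_abs hz.1 hz.2) with h | h
  exacts [(Real.cosh_le_cosh.2 h).trans hx, (Real.cosh_le_cosh.2 h).trans hy]

/- `sin` differs from the identity by a Lipschitz function, since `|cos z - 1| ≤ C - t`. -/
theorem mul_norm_sub_le_norm_sin_sub {t C : ℝ} {z w : ℂ}
    (hz : z.re ∈ Icc (-(π / 2)) (π / 2)) (hw : w.re ∈ Icc (-(π / 2)) (π / 2))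
    (hzt : t ≤ Real.cos z.re) (hwt : t ≤ Real.cos w.re)
    (hzC : Real.cosh z.im ≤ C) (hwC : Real.cosh w.im ≤ C) :
    (1 + t - C) * ‖z - w‖ ≤ ‖Complex.sin z - Complex.sin w‖ := by
  let K : Set ℂ := Complex.reLm ⁻¹' {x ∈ Icc (-(π / 2)) (π / 2) | t ≤ Real.cos x} ∩
    Complex.imLm ⁻¹' {y | Real.cosh y ≤ C}
  have hK : Convex ℝ K :=
    ((strictConcaveOn_cos_Icc.concaveOn.convex_ge t).linear_preimage Complex.reLm).inter
      ((convex_setOf_cosh_le C).linear_preimage Complex.imLm)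
  have hlip : ‖(Complex.sin z - z) - (Complex.sin w - w)‖ ≤ (C - t) * ‖z - w‖ :=
    hK.norm_image_sub_le_of_norm_hasDerivWithin_le
      (fun u _ => ((Complex.hasDerivAt_sin u).sub (hasDerivAt_id u)).hasDerivWithinAt)
      (fun u hu => (norm_cos_sub_one u).trans_le (sub_le_sub hu.2 hu.1.2))
      ⟨⟨hw, hwt⟩, hwC⟩ ⟨⟨hz, hzt⟩, hzC⟩
  have htri := norm_sub_norm_le (z - w) (Complex.sin z - Complex.sin w)
  rw [← norm_neg, show -((Complex.sin z - z) - (Complex.sin w - w)) =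
    z - w - (Complex.sin z - Complex.sin w) by ring] at hlip
  linarith

theorem mul_cosh_sq_le_cos_sq_of_norm_sin_le {δ : ℝ} {z : ℂ}
    (h : ‖Complex.sin z‖ ≤ δ * Real.cosh z.im) :
    (1 - δ ^ 2) * Real.cosh z.im ^ 2 ≤ Real.cos z.re ^ 2 := by
  have hsq : ‖Complex.sin z‖ ^ 2 ≤ (δ * Real.cosh z.im) ^ 2 := by gcongr
  rw [norm_sin_sq] at hsq
  linarith

theorem rpow_neg_eq_mul_one_div_sq {x : ℝ} (hx : 0 < x) (σ : ℝ) :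
    x ^ (-σ) = x ^ (2 - σ) * (1 / x ^ 2) := by
  rw [← Real.rpow_natCast x 2, one_div, ← Real.rpow_neg hx.le, ← Real.rpow_add hx]
  push_cast
  ring_nf

theorem rpow_neg_le_two_rpow_mul {x σ : ℝ} (hx : 2 ≤ x) (hσ : 2 ≤ σ) :
    x ^ (-σ) ≤ 2 ^ (2 - σ) * (1 / x ^ 2) := by
  rw [rpow_neg_eq_mul_one_div_sq (by linarith)]
  gcongr ?_ * _
  exact Real.rpow_le_rpow_of_nonpos two_pos hx (by linarith)

theorem antitoneOn_log_add_div_rpow {r : ℝ} (hr : 0 < r) (b : ℝ) :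
    AntitoneOn (fun x : ℝ => (Real.log x + b) / x ^ r) (Ici (Real.exp (r⁻¹ - b))) := by
  have hscale {x : ℝ} (hx : x ∈ Ici (Real.exp (r⁻¹ - b))) :
      Real.exp (r⁻¹) ≤ Real.exp b * x ∧ (Real.log x + b) / x ^ r =
        Real.exp b ^ r * (Real.log (Real.exp b * x) / (Real.exp b * x) ^ r) := by
    have hx0 : 0 < x := (Real.exp_pos _).trans_le hx
    constructor
    · calc Real.exp (r⁻¹) = Real.exp b * Real.exp (r⁻¹ - b) := by
            rw [← Real.exp_add]; ring_nf
        _ ≤ Real.exp b * x := by gcongr; exact hx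
    · rw [Real.log_mul (Real.exp_ne_zero b) hx0.ne', Real.log_exp,
        Real.mul_rpow (Real.exp_pos b).le hx0.le]
      field_simp
      ring
  intro x hx y hy hxy
  simp only [(hscale hx).2, (hscale hy).2]
  exact mul_le_mul_of_nonneg_left (Real.log_div_self_rpow_antitoneOn hr (hscale hx).1
    (hscale hy).1 (by gcongr)) (by positivity)

theorem log_add_mul_rpow_neg_le {x σ b : ℝ} (hx : 2 ≤ x) (hσ : 2 < σ)
    (hb : (σ - 2)⁻¹ ≤ Real.log 2 + b) :
    (Real.log x + b) * x ^ (-σ) ≤ (Real.log 2 + b) * 2 ^ (2 - σ) * (1 / x ^ 2) := by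
  have hx0 : 0 < x := by linarith
  have htwo : Real.exp ((σ - 2)⁻¹ - b) ≤ 2 := by
    rw [← Real.le_log_iff_exp_le two_pos]
    linarith
  have hanti := antitoneOn_log_add_div_rpow (sub_pos.2 hσ) b htwo (htwo.trans hx) hx
  simp only [div_eq_mul_inv, ← Real.rpow_neg hx0.le, ← Real.rpow_neg zero_le_two,
    neg_sub] at hanti
  calc (Real.log x + b) * x ^ (-σ) = (Real.log x + b) * x ^ (2 - σ) * (1 / x ^ 2) := by
        rw [rpow_neg_eq_mul_one_div_sq hx0, mul_assoc]
    _ ≤ _ := by gcongr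

theorem hasSum_one_div_nat_add_two_sq :
    HasSum (fun n : ℕ => 1 / ((n + 2 : ℕ) : ℝ) ^ 2) (π ^ 2 / 6 - 1) := by
  simpa [Finset.sum_range_succ] using (hasSum_nat_add_iff' 2).2 hasSum_zeta_two

theorem pi_sq_div_six_sub_one_le : π ^ 2 / 6 - 1 ≤ 0.645 := by
  nlinarith [Real.pi_lt_d4, Real.pi_pos]

theorem two_rpow_two_sub_five_halves_le : (2 : ℝ) ^ (2 - 5 / 2 : ℝ) ≤ 0.7072 := by
  have hsq : ((2 : ℝ) ^ (2 - 5 / 2 : ℝ)) ^ 2 = 1 / 2 := by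
    rw [← Real.rpow_natCast, ← Real.rpow_mul zero_le_two]
    norm_num [Real.rpow_neg_one]
  refine le_of_sq_le_sq ?_ (by norm_num)
  rw [hsq]
  norm_num

theorem log_two_add_pi_div_two_mul_le :
    (Real.log 2 + π / 2) * 2 ^ (2 - 5 / 2 : ℝ) * (π ^ 2 / 6 - 1) ≤ 1.04 := by
  have hnonneg : 0 ≤ π ^ 2 / 6 - 1 := hasSum_one_div_nat_add_two_sq.nonneg fun n => by positivity
  calc (Real.log 2 + π / 2) * 2 ^ (2 - 5 / 2 : ℝ) * (π ^ 2 / 6 - 1)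
      ≤ (0.6932 + 3.1416 / 2) * 0.7072 * 0.645 := by
        gcongr
        exacts [Real.log_two_lt_d9.le.trans (by norm_num), Real.pi_lt_d4.le,
          two_rpow_two_sub_five_halves_le, pi_sq_div_six_sub_one_le]
    _ ≤ 1.04 := by norm_num

/-- The factor of `ζ(1 - w, a)` in Hurwitz's formula that carries its zeros for `Re w > 1`. -/
noncomputable def hurwitzDual (a : ℝ) (w : ℂ) : ℂ :=
  Complex.cos (π * w / 2) * cosZeta a w + Complex.sin (π * w / 2) * sinZeta a w

/-- The `m`-th term `cos (πw/2 - 2πam) m⁻ʷ` of the Dirichlet-like series of `hurwitzDual a w`.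
The series is indexed from `m = 0`, where the term vanishes for `w ≠ 0`. -/
noncomputable def hurwitzDualTerm (a : ℝ) (m : ℕ) (w : ℂ) : ℂ :=
  Complex.cos (π * w / 2 - 2 * π * a * m) * (m : ℂ) ^ (-w)

/-- The series of `hurwitzDual a w` without its leading term `m = 1`, as a perturbation of it. -/
noncomputable def hurwitzDualTail (a : ℝ) (w : ℂ) : ℂ :=
  hurwitzDual a w - hurwitzDualTerm a 1 w

theorem hurwitzZeta_one_sub_eq_hurwitzDual (a : ℝ) {w : ℂ} (hw : 1 < w.re) :
    hurwitzZeta a (1 - w) = 2 * (2 * π) ^ (-w) * Complex.Gamma w * hurwitzDual a w := by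
  have hne (n : ℕ) : w ≠ -n := by
    rintro rfl
    simp only [Complex.neg_re, Complex.natCast_re] at hw
    linarith [n.cast_nonneg (α := ℝ)]
  have hne_one : w ≠ 1 := by rintro rfl; simp at hw
  rw [hurwitzZeta, hurwitzZetaEven_one_sub _ hne (.inr hne_one), hurwitzZetaOdd_one_sub _ hne,
    hurwitzDual]
  ring

theorem hurwitzZeta_one_sub_eq_zero_iff (a : ℝ) {w : ℂ} (hw : 1 < w.re) :
    hurwitzZeta a (1 - w) = 0 ↔ hurwitzDual a w = 0 := by
  have hGamma : Complex.Gamma w ≠ 0 := Complex.Gamma_ne_zero_of_re_pos (by linarith)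
  have hpow : (2 * π : ℂ) ^ (-w) ≠ 0 := by simp [Complex.cpow_eq_zero_iff, Real.pi_ne_zero]
  simp [hurwitzZeta_one_sub_eq_hurwitzDual a hw, hGamma, hpow]

theorem hasSum_hurwitzDual (a : ℝ) {w : ℂ} (hw : 1 < w.re) :
    HasSum (fun m => hurwitzDualTerm a m w) (hurwitzDual a w) := by
  refine (((hasSum_nat_cosZeta a hw).mul_left _).add
    ((hasSum_nat_sinZeta a hw).mul_left _)).congr_fun fun m => ?_
  rw [hurwitzDualTerm, Complex.cos_sub, Complex.cpow_neg]
  push_cast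
  ring

theorem hasSum_hurwitzDualTail (a : ℝ) {w : ℂ} (hw : 1 < w.re) :
    HasSum (fun n => hurwitzDualTerm a (n + 2) w) (hurwitzDualTail a w) := by
  have hw0 : -w ≠ 0 := neg_ne_zero.2 (by rintro rfl; norm_num at hw)
  have hzero : hurwitzDualTerm a 0 w = 0 := by simp [hurwitzDualTerm, hw0]
  simpa [Finset.sum_range_succ, hzero, hurwitzDualTail] using
    (hasSum_nat_add_iff' 2).2 (hasSum_hurwitzDual a hw)

theorem hurwitzDualTerm_ofReal (a : ℝ) (m : ℕ) (u : ℝ) :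
    hurwitzDualTerm a m u = (Real.cos (π * u / 2 - 2 * π * a * m) * (m : ℝ) ^ (-u) : ℝ) := by
  rw [hurwitzDualTerm, Complex.ofReal_mul, Complex.ofReal_cpow m.cast_nonneg]
  push_cast
  rfl

theorem hurwitzDual_ofReal_im (a : ℝ) {u : ℝ} (hu : 1 < u) : (hurwitzDual a u).im = 0 := by
  have hsum := Complex.hasSum_im (hasSum_hurwitzDual a (w := u) (by simpa using hu))
  simp only [hurwitzDualTerm_ofReal, Complex.ofReal_im] at hsum
  exact hsum.unique hasSum_zero

theorem continuousAt_hurwitzDual (a : ℝ) {w : ℂ} (hw : w ≠ 1) :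
    ContinuousAt (hurwitzDual a) w := by
  have hcos := (differentiableAt_cosZeta a (.inl hw)).continuousAt
  have hsin := (differentiableAt_sinZeta a).continuous.continuousAt (x := w)
  unfold hurwitzDual
  fun_prop

theorem hurwitzDualTerm_arg_im (a : ℝ) (m : ℕ) (w : ℂ) :
    (π * w / 2 - 2 * π * a * m : ℂ).im = π / 2 * w.im := by
  rw [show (π * w / 2 - 2 * π * a * m : ℂ) = (π / 2 : ℝ) * w - (2 * π * a * m : ℝ) by
    push_cast; ring, Complex.sub_im, Complex.im_ofReal_mul, Complex.ofReal_im, sub_zero]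

theorem norm_hurwitzDualTerm_le (a : ℝ) {m : ℕ} (hm : 0 < m) (w : ℂ) :
    ‖hurwitzDualTerm a m w‖ ≤ Real.cosh (π / 2 * w.im) * (m : ℝ) ^ (-w.re) := by
  rw [hurwitzDualTerm, norm_mul, Complex.norm_natCast_cpow_of_pos hm, Complex.neg_re,
    ← hurwitzDualTerm_arg_im a m w]
  gcongr
  exact norm_cos_le_cosh _

theorem hasDerivAt_hurwitzDualTerm (a : ℝ) {m : ℕ} (hm : 0 < m) (w : ℂ) :
    HasDerivAt (hurwitzDualTerm a m)
      (-((Complex.sin (π * w / 2 - 2 * π * a * m) * (π / 2 : ℝ) +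
        Complex.cos (π * w / 2 - 2 * π * a * m) * Real.log m) * (m : ℂ) ^ (-w))) w := by
  have harg : HasDerivAt (fun w : ℂ => (π * w / 2 - 2 * π * a * m : ℂ)) (π / 2) w := by
    simpa using (((hasDerivAt_id w).const_mul (π : ℂ)).div_const 2).sub_const (2 * π * a * m : ℂ)
  have hpow := (hasDerivAt_neg' w).const_cpow (c := m) (.inl (by exact_mod_cast hm.ne'))
  refine (harg.ccos.mul hpow).congr_deriv ?_
  rw [← Complex.natCast_log]
  push_cast
  ring

theorem norm_deriv_hurwitzDualTerm_le (a : ℝ) {m : ℕ} (hm : 0 < m) (w : ℂ) :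
    ‖deriv (hurwitzDualTerm a m) w‖ ≤
      Real.cosh (π / 2 * w.im) * ((Real.log m + π / 2) * (m : ℝ) ^ (-w.re)) := by
  have hlog : 0 ≤ Real.log m := Real.log_natCast_nonneg m
  have hsin := norm_sin_le_cosh (π * w / 2 - 2 * π * a * m)
  have hcos := norm_cos_le_cosh (π * w / 2 - 2 * π * a * m)
  rw [hurwitzDualTerm_arg_im] at hsin hcos
  rw [(hasDerivAt_hurwitzDualTerm a hm w).deriv, norm_neg, norm_mul,
    Complex.norm_natCast_cpow_of_pos hm, Complex.neg_re, ← mul_assoc]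
  gcongr
  refine (norm_add_le _ _).trans ?_
  rw [norm_mul, norm_mul, Complex.norm_of_nonneg hlog, Complex.norm_of_nonneg (by positivity),
    mul_add, add_comm]
  gcongr

theorem norm_hurwitzDualTail_le (a : ℝ) {w : ℂ} {σ : ℝ} (hσ : 2 ≤ σ) (hw : σ ≤ w.re) :
    ‖hurwitzDualTail a w‖ ≤ 2 ^ (2 - σ) * (π ^ 2 / 6 - 1) * Real.cosh (π / 2 * w.im) := by
  rw [← (hasSum_hurwitzDualTail a (by linarith)).tsum_eq, mul_comm _ (Real.cosh _), ← mul_assoc]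
  refine tsum_of_norm_bounded (hasSum_one_div_nat_add_two_sq.mul_left _) fun n => ?_
  have hn : (2 : ℝ) ≤ (n + 2 : ℕ) := by exact_mod_cast Nat.le_add_left 2 n
  calc ‖hurwitzDualTerm a (n + 2) w‖
      ≤ Real.cosh (π / 2 * w.im) * ((n + 2 : ℕ) : ℝ) ^ (-w.re) :=
        norm_hurwitzDualTerm_le a (by lia) w
    _ ≤ Real.cosh (π / 2 * w.im) * ((n + 2 : ℕ) : ℝ) ^ (-σ) := by gcongr; linarith
    _ ≤ Real.cosh (π / 2 * w.im) * (2 ^ (2 - σ) * (1 / ((n + 2 : ℕ) : ℝ) ^ 2)) := by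
        gcongr; exact rpow_neg_le_two_rpow_mul hn hσ
    _ = _ := (mul_assoc _ _ _).symm

theorem norm_hurwitzDualTerm_sub_le (a : ℝ) {σ C : ℝ} {m : ℕ} (hm : 2 ≤ m) (hσ : 2 < σ)
    (hσ' : (σ - 2)⁻¹ ≤ Real.log 2 + π / 2) {x y : ℂ} (hx : σ ≤ x.re) (hy : σ ≤ y.re)
    (hxC : Real.cosh (π / 2 * x.im) ≤ C) (hyC : Real.cosh (π / 2 * y.im) ≤ C) :
    ‖hurwitzDualTerm a m x - hurwitzDualTerm a m y‖ ≤
      C * ((Real.log 2 + π / 2) * 2 ^ (2 - σ) * (1 / (m : ℝ) ^ 2)) * ‖x - y‖ := by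
  let K : Set ℂ := {w | σ ≤ w.re} ∩ ((π / 2) • Complex.imLm) ⁻¹' {v | Real.cosh v ≤ C}
  have hK : Convex ℝ K :=
    (convex_halfSpace_re_ge σ).inter ((convex_setOf_cosh_le C).linear_preimage _)
  have hC : 0 ≤ C := (Real.cosh_pos _).le.trans hxC
  have hm' : (2 : ℝ) ≤ m := by exact_mod_cast hm
  refine hK.norm_image_sub_le_of_norm_deriv_le
    (fun w _ => (hasDerivAt_hurwitzDualTerm a (by lia) w).differentiableAt) (fun w hw => ?_)
    ⟨hy, hyC⟩ ⟨hx, hxC⟩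
  calc ‖deriv (hurwitzDualTerm a m) w‖
      ≤ Real.cosh (π / 2 * w.im) * ((Real.log m + π / 2) * (m : ℝ) ^ (-w.re)) :=
        norm_deriv_hurwitzDualTerm_le a (by lia) w
    _ ≤ C * ((Real.log m + π / 2) * (m : ℝ) ^ (-σ)) := by
        gcongr
        exacts [hw.2, by linarith, hw.1]
    _ ≤ _ := mul_le_mul_of_nonneg_left (log_add_mul_rpow_neg_le hm' hσ hσ') hC

theorem norm_hurwitzDualTail_sub_le (a : ℝ) {σ C : ℝ} (hσ : 2 < σ)
    (hσ' : (σ - 2)⁻¹ ≤ Real.log 2 + π / 2) {x y : ℂ} (hx : σ ≤ x.re) (hy : σ ≤ y.re)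
    (hxC : Real.cosh (π / 2 * x.im) ≤ C) (hyC : Real.cosh (π / 2 * y.im) ≤ C) :
    ‖hurwitzDualTail a x - hurwitzDualTail a y‖ ≤
      C * ((Real.log 2 + π / 2) * 2 ^ (2 - σ) * (π ^ 2 / 6 - 1)) * ‖x - y‖ := by
  rw [← ((hasSum_hurwitzDualTail a (by linarith)).sub
    (hasSum_hurwitzDualTail a (by linarith))).tsum_eq]
  exact tsum_of_norm_bounded
    (((hasSum_one_div_nat_add_two_sq.mul_left _).mul_left C).mul_right ‖x - y‖)
    fun n => norm_hurwitzDualTerm_sub_le a (by lia) hσ hσ' hx hy hxC hyC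

/-- The centre of the `n`-th strip `|Re w - (4a + 2n + 1)| ≤ 1`, in the variable `w = 1 - s`;
it is a zero of the leading term `cos (πw/2 - 2πa)`. -/
def stripCenter (a : ℝ) (n : ℤ) : ℝ := 4 * a + 2 * n + 1

/-- The affine coordinate on the `n`-th strip in which the leading term is `± sin`; the strip
becomes `|Re| ≤ π / 2`. -/
noncomputable def stripAngle (a : ℝ) (n : ℤ) (w : ℂ) : ℂ := (π / 2 : ℝ) * (w - stripCenter a n)

section Strip

variable {a : ℝ} {n : ℤ}

theorem stripAngle_re (w : ℂ) : (stripAngle a n w).re = π / 2 * (w.re - stripCenter a n) := by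
  rw [stripAngle, Complex.re_ofReal_mul, Complex.sub_re, Complex.ofReal_re]

theorem stripAngle_im (w : ℂ) : (stripAngle a n w).im = π / 2 * w.im := by
  rw [stripAngle, Complex.im_ofReal_mul, Complex.sub_im, Complex.ofReal_im, sub_zero]

theorem norm_stripAngle_sub (x y : ℂ) :
    ‖stripAngle a n x - stripAngle a n y‖ = π / 2 * ‖x - y‖ := by
  rw [stripAngle, stripAngle, ← mul_sub, sub_sub_sub_cancel_right, norm_mul,
    Complex.norm_of_nonneg (by positivity)]

theorem hurwitzDualTerm_one (a : ℝ) (n : ℤ) (w : ℂ) :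
    hurwitzDualTerm a 1 w = ((-1) ^ (n + 1) : ℝ) * Complex.sin (stripAngle a n w) := by
  have harg : (π * w / 2 - 2 * π * a * (1 : ℕ) : ℂ) = stripAngle a n w + π / 2 + n * π := by
    simp only [stripAngle, stripCenter]
    push_cast
    ring
  rw [hurwitzDualTerm, harg, Complex.cos_antiperiodic.add_int_mul_eq, Int.cast_negOnePow,
    Complex.cos_add_pi_div_two]
  simp [zpow_add_one₀]

theorem hurwitzDual_eq_sin_add_tail (a : ℝ) (n : ℤ) (w : ℂ) :
    hurwitzDual a w =
      ((-1) ^ (n + 1) : ℝ) * Complex.sin (stripAngle a n w) + hurwitzDualTail a w := by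
  rw [← hurwitzDualTerm_one, hurwitzDualTail, add_sub_cancel]

theorem norm_sin_stripAngle_sub_eq (a : ℝ) (n : ℤ) {x y : ℂ} (hx : hurwitzDual a x = 0)
    (hy : hurwitzDual a y = 0) :
    ‖Complex.sin (stripAngle a n x) - Complex.sin (stripAngle a n y)‖ =
      ‖hurwitzDualTail a x - hurwitzDualTail a y‖ := by
  rw [hurwitzDual_eq_sin_add_tail a n] at hx hy
  rw [eq_neg_of_add_eq_zero_right hx, eq_neg_of_add_eq_zero_right hy, ← neg_sub', norm_neg,
    ← mul_sub, norm_mul]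
  simp

theorem norm_sin_stripAngle_eq (a : ℝ) (n : ℤ) {w : ℂ} (h0 : hurwitzDual a w = 0) :
    ‖Complex.sin (stripAngle a n w)‖ = ‖hurwitzDualTail a w‖ := by
  rw [hurwitzDual_eq_sin_add_tail a n] at h0
  rw [eq_neg_of_add_eq_zero_right h0, norm_neg, norm_mul]
  simp

theorem stripAngle_re_mem {w : ℂ} (hw : |w.re - stripCenter a n| ≤ 1) :
    (stripAngle a n w).re ∈ Icc (-(π / 2)) (π / 2) := by
  rw [stripAngle_re]
  constructor <;> nlinarith [Real.pi_pos, abs_le.1 hw]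

theorem abs_re_sub_stripCenter_le_half (hc : 3 ≤ stripCenter a n) {w : ℂ}
    (hw : |w.re - stripCenter a n| ≤ 1) (h0 : hurwitzDual a w = 0) :
    |w.re - stripCenter a n| ≤ 1 / 2 := by
  have hsin : ‖Complex.sin (stripAngle a n w)‖ ≤ 0.645 * Real.cosh (stripAngle a n w).im := by
    have htail := norm_hurwitzDualTail_le a le_rfl
      (show 2 ≤ w.re by linarith [(abs_le.1 hw).1])
    rw [sub_self, Real.rpow_zero, one_mul] at htail
    rw [norm_sin_stripAngle_eq a n h0, stripAngle_im]
    grw [htail, pi_sq_div_six_sub_one_le]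
  have hcos_sq : 1 / 2 < Real.cos (stripAngle a n w).re ^ 2 := by
    nlinarith [mul_cosh_sq_le_cos_sq_of_norm_sin_le hsin, Real.one_le_cosh (stripAngle a n w).im]
  by_contra! hlt
  have hcos_two : Real.cos |2 * (stripAngle a n w).re| ≤ 0 := by
    rw [stripAngle_re, ← mul_assoc, mul_div_cancel₀ _ two_ne_zero, abs_mul,
      abs_of_pos Real.pi_pos]
    apply Real.cos_nonpos_of_pi_div_two_le_of_le <;> nlinarith [Real.pi_pos]
  rw [Real.cos_sq, ← Real.cos_abs] at hcos_sq
  linarith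

/- `0.8899` is a lower approximation of `√(1 - (0.7072 * 0.645)²)`. -/
theorem mul_cosh_le_cos_of_hurwitzDual_eq_zero (hc : 3 ≤ stripCenter a n) {w : ℂ}
    (hw : |w.re - stripCenter a n| ≤ 1) (h0 : hurwitzDual a w = 0) :
    0.8899 * Real.cosh (stripAngle a n w).im ≤ Real.cos (stripAngle a n w).re := by
  have hhalf := abs_re_sub_stripCenter_le_half hc hw h0
  have hsin : ‖Complex.sin (stripAngle a n w)‖ ≤
      0.7072 * 0.645 * Real.cosh (stripAngle a n w).im := by
    have htail := norm_hurwitzDualTail_le a (σ := 5 / 2) (by norm_num)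
      (show 5 / 2 ≤ w.re by linarith [(abs_le.1 hhalf).1])
    rw [norm_sin_stripAngle_eq a n h0, stripAngle_im]
    grw [htail, pi_sq_div_six_sub_one_le, two_rpow_two_sub_five_halves_le]
  refine le_of_sq_le_sq ?_ (Real.cos_nonneg_of_mem_Icc (stripAngle_re_mem hw))
  nlinarith [mul_cosh_sq_le_cos_sq_of_norm_sin_le hsin, Real.one_le_cosh (stripAngle a n w).im]

theorem stripAngle_bounds_of_hurwitzDual_eq_zero (hc : 3 ≤ stripCenter a n) {w : ℂ}
    (hw : |w.re - stripCenter a n| ≤ 1) (h0 : hurwitzDual a w = 0) :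
    0.8899 ≤ Real.cos (stripAngle a n w).re ∧ Real.cosh (stripAngle a n w).im ≤ 1.1238 := by
  have hcos := mul_cosh_le_cos_of_hurwitzDual_eq_zero hc hw h0
  constructor
  · linarith [Real.one_le_cosh (stripAngle a n w).im]
  · linarith [Real.cos_le_one (stripAngle a n w).re]

theorem eq_of_hurwitzDual_eq_zero (hc : 3 ≤ stripCenter a n) {x y : ℂ}
    (hx : |x.re - stripCenter a n| ≤ 1) (hx0 : hurwitzDual a x = 0)
    (hy : |y.re - stripCenter a n| ≤ 1) (hy0 : hurwitzDual a y = 0) : x = y := by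
  have hre {w : ℂ} (hw : |w.re - stripCenter a n| ≤ 1) (h0 : hurwitzDual a w = 0) :
      5 / 2 ≤ w.re := by
    linarith [(abs_le.1 (abs_re_sub_stripCenter_le_half hc hw h0)).1]
  obtain ⟨hx_cos, hx_cosh⟩ := stripAngle_bounds_of_hurwitzDual_eq_zero hc hx hx0
  obtain ⟨hy_cos, hy_cosh⟩ := stripAngle_bounds_of_hurwitzDual_eq_zero hc hy hy0
  have hlower := mul_norm_sub_le_norm_sin_sub (stripAngle_re_mem hx) (stripAngle_re_mem hy)
    hx_cos hy_cos hx_cosh hy_cosh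
  rw [norm_sin_stripAngle_sub_eq a n hx0 hy0, norm_stripAngle_sub] at hlower
  rw [stripAngle_im] at hx_cosh hy_cosh
  have hupper := norm_hurwitzDualTail_sub_le a (σ := 5 / 2) (by norm_num)
    (by linarith [Real.log_two_gt_d9, Real.pi_gt_d2]) (hre hx hx0) (hre hy hy0) hx_cosh hy_cosh
  have hexpand : 1.2 * ‖x - y‖ ≤ 1.1238 * 1.04 * ‖x - y‖ := by
    calc 1.2 * ‖x - y‖ ≤ (1 + 0.8899 - 1.1238) * (π / 2) * ‖x - y‖ := by
          gcongr
          linarith [Real.pi_gt_d2]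
      _ ≤ ‖hurwitzDualTail a x - hurwitzDualTail a y‖ := by rwa [mul_assoc]
      _ ≤ 1.1238 * 1.04 * ‖x - y‖ := by
          grw [hupper, log_two_add_pi_div_two_mul_le]
  exact sub_eq_zero.1 (norm_le_zero_iff.1 (by linarith))

theorem abs_sign_mul_hurwitzDual_re_sub_sin_le (a : ℝ) (n : ℤ) {u : ℝ} (hu : 2 ≤ u) :
    |(-1) ^ (n + 1) * (hurwitzDual a u).re - Real.sin (π / 2 * (u - stripCenter a n))| ≤
      0.645 := by
  have hangle : stripAngle a n u = (π / 2 * (u - stripCenter a n) : ℝ) := by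
    rw [stripAngle]; push_cast; rfl
  have hsign : ((-1) ^ (n + 1) : ℝ) * (-1) ^ (n + 1) = 1 := by
    rw [← mul_zpow, neg_one_mul, neg_neg, one_zpow]
  have htail := norm_hurwitzDualTail_le a le_rfl (show 2 ≤ (u : ℂ).re from hu)
  calc |(-1) ^ (n + 1) * (hurwitzDual a u).re - Real.sin (π / 2 * (u - stripCenter a n))|
      = |(hurwitzDualTail a u).re| := by
        rw [hurwitzDual_eq_sin_add_tail a n, hangle, ← Complex.ofReal_sin, Complex.add_re,
          Complex.re_ofReal_mul, Complex.ofReal_re, mul_add, ← mul_assoc, hsign, one_mul,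
          add_sub_cancel_left, abs_mul, abs_neg_one_zpow, one_mul]
    _ ≤ ‖hurwitzDualTail a u‖ := Complex.abs_re_le_norm _
    _ ≤ 0.645 := by
        simp only [sub_self, Real.rpow_zero, one_mul, Complex.ofReal_im, mul_zero,
          Real.cosh_zero, mul_one] at htail
        exact htail.trans pi_sq_div_six_sub_one_le

theorem exists_real_hurwitzDual_eq_zero (hc : 3 ≤ stripCenter a n) :
    ∃ u ∈ Ioo (stripCenter a n - 1) (stripCenter a n + 1), hurwitzDual a (u : ℝ) = 0 := by
  set c := stripCenter a n
  have hleft := abs_le.1 (abs_sign_mul_hurwitzDual_re_sub_sin_le a n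
    (show 2 ≤ c - 1 by linarith))
  have hright := abs_le.1 (abs_sign_mul_hurwitzDual_re_sub_sin_le a n
    (show 2 ≤ c + 1 by linarith))
  rw [sub_sub_cancel_left, mul_neg_one, Real.sin_neg, Real.sin_pi_div_two] at hleft
  rw [add_sub_cancel_left, mul_one, Real.sin_pi_div_two] at hright
  have hcont : ContinuousOn (fun u : ℝ => (-1) ^ (n + 1) * (hurwitzDual a u).re)
      (Icc (c - 1) (c + 1)) := by
    intro u hu
    have hu1 : (u : ℂ) ≠ 1 := by
      rw [Complex.ofReal_ne_one]
      linarith [hu.1]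
    exact (continuousAt_const.mul (Complex.continuous_re.continuousAt.comp
      ((continuousAt_hurwitzDual a hu1).comp
        Complex.continuous_ofReal.continuousAt))).continuousWithinAt
  obtain ⟨u, hu, hu0⟩ := intermediate_value_Ioo (by linarith) hcont
    (show (0 : ℝ) ∈ Ioo _ _ from ⟨by linarith [hleft.2], by linarith [hright.1]⟩)
  refine ⟨u, hu, Complex.ext ?_ (hurwitzDual_ofReal_im a (by linarith [hu.1]))⟩
  simpa [zpow_ne_zero] using hu0

end Strip

theorem exists_real_forall_strip_hurwitzZeta_eq_zero_iff (a : ℝ) {n : ℤ} (hn : 1 - 2 * a ≤ n) :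
    ∃ σ ∈ Ioo (-2 * (n : ℝ) - 4 * a - 1) (-2 * (n : ℝ) - 4 * a + 1),
      ∀ s : ℂ, |s.re + (2 * n + 4 * a)| ≤ 1 → (hurwitzZeta a s = 0 ↔ s = (σ : ℝ)) := by
  have hc : 3 ≤ stripCenter a n := by rw [stripCenter]; linarith
  obtain ⟨u, hu, hu0⟩ := exists_real_hurwitzDual_eq_zero hc
  have hu_strip : |(u : ℂ).re - stripCenter a n| ≤ 1 :=
    abs_le.2 ⟨by simpa using by linarith [hu.1], by simpa using by linarith [hu.2]⟩
  refine ⟨1 - u, ?_, fun s hs => ?_⟩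
  · rw [stripCenter] at hu
    constructor <;> linarith [hu.1, hu.2]
  · obtain ⟨w, rfl⟩ : ∃ w, s = 1 - w := ⟨1 - s, by ring⟩
    have hw : |w.re - stripCenter a n| ≤ 1 := by
      rw [abs_sub_comm, stripCenter]
      convert hs using 2
      simp only [Complex.sub_re, Complex.one_re]
      ring
    rw [hurwitzZeta_one_sub_eq_zero_iff a (by linarith [(abs_le.1 hw).1]), Complex.ofReal_sub,
      Complex.ofReal_one, sub_right_inj]
    exact ⟨fun h0 => eq_of_hurwitzDual_eq_zero hc hw h0 hu_strip hu0, fun h => h ▸ hu0⟩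

theorem exists_int_strip_of_re_le (a : ℝ) {x : ℝ} (hx : x ≤ -(4 * a + 1 + 2 * ⌊1 - 2 * a⌋)) :
    ∃ n : ℤ, 1 - 2 * a ≤ n ∧ |x + (2 * n + 4 * a)| ≤ 1 := by
  have hle := Int.floor_le ((1 - x - 4 * a) / 2)
  have hlt := Int.lt_floor_add_one ((1 - x - 4 * a) / 2)
  refine ⟨⌊(1 - x - 4 * a) / 2⌋, ?_, abs_le.2 ⟨by linarith, by linarith⟩⟩
  have hfloor : ⌊1 - 2 * a⌋ + 1 ≤ ⌊(1 - x - 4 * a) / 2⌋ := by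
    rw [Int.le_floor]
    push_cast
    linarith
  exact (Int.lt_floor_add_one _).le.trans (by exact_mod_cast hfloor)

end Spira

theorem spira_zero_free_region_general (a : ℝ) :
    (∀ s : ℂ, s.re ≤ -(4 * a + 1 + 2 * (⌊1 - 2 * a⌋ : ℝ)) →
        hurwitzZeta (a : UnitAddCircle) s = 0 → s.im = 0) ∧
      (∀ n : ℤ, 1 - 2 * a ≤ (n : ℝ) →
        ∃! σ : ℝ, σ ∈ Set.Ioo (-2 * (n : ℝ) - 4 * a - 1) (-2 * (n : ℝ) - 4 * a + 1) ∧
          hurwitzZeta (a : UnitAddCircle) (σ : ℂ) = 0) := by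
  refine ⟨fun s hs h0 => ?_, fun n hn => ?_⟩
  · obtain ⟨n, hn, hstrip⟩ := Spira.exists_int_strip_of_re_le a hs
    obtain ⟨σ, -, hiff⟩ := Spira.exists_real_forall_strip_hurwitzZeta_eq_zero_iff a hn
    rw [(hiff s hstrip).1 h0, Complex.ofReal_im]
  · obtain ⟨σ, hσ, hiff⟩ := Spira.exists_real_forall_strip_hurwitzZeta_eq_zero_iff a hn
    have hzero (τ : ℝ) (hτ : τ ∈ Ioo (-2 * (n : ℝ) - 4 * a - 1) (-2 * (n : ℝ) - 4 * a + 1)) :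
        hurwitzZeta a (τ : ℂ) = 0 ↔ τ = σ := by
      rw [hiff τ (abs_le.2 ⟨by simpa using by linarith [hτ.1], by simpa using by linarith [hτ.2]⟩),
        Complex.ofReal_inj]
    exact ⟨σ, ⟨hσ, (hzero σ hσ).2 rfl⟩, fun τ hτ => (hzero τ hτ.1).1 hτ.2⟩

/-- Spira's theorem: for `0 < a ≤ 1`, any zero `s` of `ζ(·, a)` with
`Re s ≤ -(4a + 1 + 2⌊1 - 2a⌋)` and `|Im s| ≤ 1` lies on the real axis; moreover, for each
integer `n ≥ 1 - 2a` there is exactly one real zero in `(-2n - 4a - 1, -2n - 4a + 1)`. -/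
theorem spira_zero_free_region (a : ℝ) (ha : 0 < a) (ha' : a ≤ 1) :
    (∀ s : ℂ, s.re ≤ -(4 * a + 1 + 2 * (⌊1 - 2 * a⌋ : ℝ)) → |s.im| ≤ 1 →
        hurwitzZeta (a : UnitAddCircle) s = 0 → s.im = 0) ∧
      (∀ n : ℤ, 1 - 2 * a ≤ (n : ℝ) →
        ∃! σ : ℝ, σ ∈ Set.Ioo (-2 * (n : ℝ) - 4 * a - 1) (-2 * (n : ℝ) - 4 * a + 1) ∧
          hurwitzZeta (a : UnitAddCircle) (σ : ℂ) = 0) :=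
  ⟨fun s hs _ => (spira_zero_free_region_general a).1 s hs, (spira_zero_free_region_general a).2⟩
end
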